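/- Every rate vector in the linearized rate region belongs to the conditional-probability rate region: R̂_0 ⊆ R_0. (Converse direction of Proposition 1, including the degenerate cases where the total busy mass Σ_{s,i} q(b,s,i) or the total idle mass Σ_{s,i} q(e,s,i) is zero.) -/

import Mathlib

open Finset

/-- Conditional-probability rate region `R_0`. -/
def condRegion {S : Type*} [Fintype S] (I : S → ℕ)
    (P rs rp : (s : S) → Fin (I s + 1) → ℝ)
    (Phat : S → ℝ) (lam : ℝ) : Set (S → ℝ) :=
  {rbar | ∃ (qb qe : ℝ) (qB qE : (s : S) → Fin (I s + 1) → ℝ),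
    0 ≤ qb ∧ 0 ≤ qe ∧ qb + qe = 1 ∧
    (∀ s i, 0 ≤ qB s i) ∧ (∀ s i, 0 ≤ qE s i) ∧
    (∑ s, ∑ i, qB s i) = 1 ∧ (∑ s, ∑ i, qE s i) = 1 ∧
    qb * (∑ s, ∑ i, rp s i * qB s i) = lam ∧
    (∀ s, qe * (∑ i, P s i * qE s i) + qb * (∑ i, P s i * qB s i) ≤ Phat s) ∧
    (∀ s, rbar s = qe * ∑ i, rs s i * qE s i)}

/-- Linearized rate region `R̂_0`. -/
def linRegion {S : Type*} [Fintype S] (I : S → ℕ)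
    (P rs rp : (s : S) → Fin (I s + 1) → ℝ)
    (Phat : S → ℝ) (lam : ℝ) : Set (S → ℝ) :=
  {rbar | ∃ qB qE : (s : S) → Fin (I s + 1) → ℝ,
    (∀ s i, 0 ≤ qB s i) ∧ (∀ s i, 0 ≤ qE s i) ∧
    (∑ s, ∑ i, rp s i * qB s i) = lam ∧
    (∀ s, (∑ i, P s i * qE s i) + (∑ i, P s i * qB s i) ≤ Phat s) ∧
    ((∑ s, ∑ i, qE s i) + (∑ s, ∑ i, qB s i)) = 1 ∧
    (∀ s, rbar s = ∑ i, rs s i * qE s i)}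

/-!
Write each of the busy and idle mass functions as a nonnegative scalar times a probability mass
function. The two scalars are `q_b` and `q_e`, the two probability mass functions are the
conditional ones, and every linear constraint carries over by homogeneity. A zero mass function
is `0` times any probability mass function, so an empty busy or idle period needs no separate
treatment.
-/

section Normalization

variable {𝕜 ι : Type*} [Semifield 𝕜] [LinearOrder 𝕜] [IsStrictOrderedRing 𝕜] [Fintype ι]

theorem exists_eq_smul_mem_stdSimplex_of_nonneg [Nonempty ι] {q : ι → 𝕜} (hq : 0 ≤ q) :
    ∃ c : 𝕜, 0 ≤ c ∧ ∃ p ∈ stdSimplex 𝕜 ι, q = c • p := by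
  classical
  have hsum_nonneg : 0 ≤ ∑ i, q i := sum_nonneg fun i _ => hq i
  obtain hsum | hsum := eq_or_ne (∑ i, q i) 0
  · have hzero : q = 0 := (Fintype.sum_eq_zero_iff_of_nonneg hq).1 hsum
    exact ⟨0, le_rfl, _, single_mem_stdSimplex 𝕜 (Classical.arbitrary ι), by simp [hzero]⟩
  · refine ⟨∑ i, q i, hsum_nonneg, (∑ i, q i)⁻¹ • q, ⟨fun i => ?_, ?_⟩,
      (smul_inv_smul₀ hsum q).symm⟩
    · exact mul_nonneg (inv_nonneg.2 hsum_nonneg) (hq i)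
    · simp only [Pi.smul_apply, smul_eq_mul, ← mul_sum, inv_mul_cancel₀ hsum]

theorem exists_eq_smul_and_sum_sum_eq_one_of_nonneg {κ : ι → Type*} [∀ i, Fintype (κ i)]
    [Nonempty (Σ i, κ i)] {q : (i : ι) → κ i → 𝕜} (hq : ∀ i j, 0 ≤ q i j) :
    ∃ c : 𝕜, 0 ≤ c ∧ ∃ p : (i : ι) → κ i → 𝕜,
      (∀ i j, 0 ≤ p i j) ∧ ∑ i, ∑ j, p i j = 1 ∧ q = c • p := by
  obtain ⟨c, hc, p, ⟨hp, hp_sum⟩, hqp⟩ :=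
    exists_eq_smul_mem_stdSimplex_of_nonneg (q := Sigma.uncurry q) fun x => hq x.1 x.2
  refine ⟨c, hc, Sigma.curry p, fun i j => hp ⟨i, j⟩, ?_, ?_⟩
  · rwa [Fintype.sum_sigma] at hp_sum
  · exact funext₂ fun i j => congrFun hqp ⟨i, j⟩

end Normalization

theorem lin_region_subset_cond_region_general {S : Type*} [Fintype S] (I : S → ℕ)
    (P rs rp : (s : S) → Fin (I s + 1) → ℝ) (Phat : S → ℝ) (lam : ℝ) :
    linRegion I P rs rp Phat lam ⊆ condRegion I P rs rp Phat lam := by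
  rintro rbar ⟨qB, qE, hqB, hqE, hload, hpower, htotal, hrate⟩
  obtain _ | _ := isEmpty_or_nonempty S
  · simp at htotal
  have : Nonempty (Σ s, Fin (I s + 1)) := ‹Nonempty S›.map fun s => ⟨s, 0⟩
  obtain ⟨b, hb, pB, hpB, hpB_sum, rfl⟩ := exists_eq_smul_and_sum_sum_eq_one_of_nonneg hqB
  obtain ⟨e, he, pE, hpE, hpE_sum, rfl⟩ := exists_eq_smul_and_sum_sum_eq_one_of_nonneg hqE
  simp only [Pi.smul_apply, smul_eq_mul, mul_left_comm _ b, mul_left_comm _ e, ← mul_sum,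
    hpB_sum, hpE_sum, mul_one] at hload hpower htotal hrate
  exact ⟨b, e, pB, pE, hb, he, (add_comm b e).trans htotal, hpB, hpE, hpB_sum, hpE_sum,
    hload, hpower, hrate⟩

/-- **Converse direction of Proposition 1.** Every rate vector in the linearized
rate region belongs to the conditional-probability rate region: `R̂_0 ⊆ R_0`. -/
theorem lin_region_subset_cond_region
    {S : Type*} [Fintype S] [Nonempty S]
    (I : S → ℕ) (hI : ∀ s, 1 ≤ I s)
    (P rs rp : (s : S) → Fin (I s + 1) → ℝ) (rp0 : ℝ)
    (Phat : S → ℝ) (lam : ℝ)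
    (hP0 : ∀ s, P s 0 = 0) (hPnn : ∀ s i, 0 ≤ P s i)
    (hrs0 : ∀ s, rs s 0 = 0) (hrs : ∀ s i, rs s i ∈ Set.Icc (0:ℝ) 1)
    (hrp : ∀ s i, rp s i ∈ Set.Icc (0:ℝ) 1) (hrp00 : ∀ s, rp s 0 = rp0)
    (hrp0 : rp0 ∈ Set.Icc (0:ℝ) 1)
    (hPhat : ∀ s, 0 ≤ Phat s) (hlam : 0 ≤ lam) :
    linRegion I P rs rp Phat lam ⊆ condRegion I P rs rp Phat lam :=
  lin_region_subset_cond_region_general I P rs rp Phat lam
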